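/- There exist a constant c > 0 and n₀ such that for all n ≥ n₀, the online Ramsey number satisfies r̃(3,n) ≥ c · n³/(log n)², where log denotes the natural logarithm. -/

import Mathlib

open scoped Classical

namespace OnlineRamseyGame

/-- A valid Builder strategy: it never builds a loop, and along any play the
edges built are pairwise distinct. -/
def ValidBuilder {V : Type*} (B : List Bool → Sym2 V) : Prop :=
  (∀ h : List Bool, ¬ (B h).IsDiag) ∧
  ∀ h : List Bool, ∀ i : ℕ, i < h.length → B (h.take i) ≠ B h

/-- The history of Painter's colors after `t` turns against Painter strategy `P`
(Builder's moves are determined by this history). -/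
def histOf (P : List Bool → Bool) : ℕ → List Bool
  | 0 => []
  | t + 1 => histOf P t ++ [P (histOf P t)]

/-- The graph built by `edge` contains a monochromatic clique on `k` vertices in
color `col` within the first `N` turns. -/
def HasMonoClique {V : Type*} (edge : ℕ → Sym2 V) (color : ℕ → Bool)
    (N k : ℕ) (col : Bool) : Prop :=
  ∃ S : Finset V, S.card = k ∧
    ∀ u ∈ S, ∀ v ∈ S, u ≠ v → ∃ t, t < N ∧ edge t = s(u, v) ∧ color t = col

/-- Builder has a valid strategy winning the `(m,n)` online Ramsey game within `N`
turns against every Painter strategy (red = `true`, blue = `false`). -/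
def BuilderWins (m n N : ℕ) : Prop :=
  ∃ B : List Bool → Sym2 ℕ, ValidBuilder B ∧
    ∀ P : List Bool → Bool,
      HasMonoClique (fun t => B (histOf P t)) (fun t => P (histOf P t)) N m true ∨
      HasMonoClique (fun t => B (histOf P t)) (fun t => P (histOf P t)) N n false

/-- The online Ramsey number `r̃(m,n)`: the least `N` such that Builder can
guarantee a win within `N` turns. -/
noncomputable def onlineRamsey (m n : ℕ) : ℕ := sInf {N | BuilderWins m n N}

/-!
Painter colors an edge blue unless both of its ends already have degree at least `d = n / 8` and red
would not close a red triangle; such a free edge should become red with probability about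
`p = C log n / n`. Then no red triangle appears, and only the `O(N / n)` heavy vertices, those of
degree at least `d`, are incident to free edges.

Suppose that a blue clique `S` on `n` vertices is built within `N` turns. At most `n d` of its edges
were built at a vertex of small degree. An edge that would have closed a red triangle has both ends
among the red neighbors in `S` of some heavy `w`. If `degIn S w` is the number of those neighbors,
there are at most `∑ degIn S w ^ 2` such edges. This sum is small for coin flips: every `degIn S w`
is small, and the red edges between `S` and any `n` heavy vertices are `O(n log n)` in number, so
that fewer than `n` of the `degIn S w` exceed `O(log n)`. Finally, `S` spans less than `n ^ 2 / 4`
free edges, since otherwise one of them would be red. For `N ≤ c n ^ 3 / (log n) ^ 2` these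
contributions sum to less than `n.choose 2`.

The coin flips are derandomized by conditional expectations: Painter keeps a sum of exponential
martingales, one for each way in which the above can fail, from increasing. As the vertex set is
infinite, the union bound ranges over vertices named by the turns at which their edges are built.
-/

section

open Finset SimpleGraph

/-! ### Ramsey's theorem and existence of winning strategies -/

theorem exists_clique_or_compl_clique {V : Type*} (m n : ℕ) :
    ∃ R : ℕ, ∀ (G : SimpleGraph V) (A : Finset V), R ≤ #A →
      (∃ S ⊆ A, G.IsNClique m S) ∨ ∃ S ⊆ A, Gᶜ.IsNClique n S := by
  induction m generalizing n with
  | zero => exact ⟨0, fun G A _ => .inl ⟨∅, empty_subset A, by simp [isNClique_iff]⟩⟩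
  | succ m ihm =>
    induction n with
    | zero => exact ⟨0, fun G A _ => .inr ⟨∅, empty_subset A, by simp [isNClique_iff]⟩⟩
    | succ n ihn =>
      obtain ⟨R₁, hR₁⟩ := ihm (n + 1)
      obtain ⟨R₂, hR₂⟩ := ihn
      refine ⟨R₁ + R₂ + 1, fun G A hA => ?_⟩
      obtain ⟨x, hx⟩ : A.Nonempty := card_pos.mp (by omega)
      have hsub {T : Finset V} (hT : T ⊆ A.erase x) : T ⊆ A := hT.trans (erase_subset _ _)
      have hcard : #{y ∈ A.erase x | G.Adj x y} + #{y ∈ A.erase x | ¬ G.Adj x y} = #A - 1 := by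
        rw [card_filter_add_card_filter_not, card_erase_of_mem hx]
      rcases le_or_gt R₁ #{y ∈ A.erase x | G.Adj x y} with h | h
      · rcases hR₁ G _ h with ⟨S, hS, hclique⟩ | ⟨S, hS, hclique⟩
        · refine .inl ⟨insert x S, insert_subset hx (hsub (hS.trans (filter_subset _ _))),
            hclique.insert fun y hy => (mem_filter.mp (hS hy)).2⟩
        · exact .inr ⟨S, hsub (hS.trans (filter_subset _ _)), hclique⟩
      · rcases hR₂ G {y ∈ A.erase x | ¬ G.Adj x y} (by omega) with
          ⟨S, hS, hclique⟩ | ⟨S, hS, hclique⟩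
        · exact .inl ⟨S, hsub (hS.trans (filter_subset _ _)), hclique⟩
        · refine .inr ⟨insert x S, insert_subset hx (hsub (hS.trans (filter_subset _ _))),
            hclique.insert fun y hy => ?_⟩
          have hy := mem_filter.mp (hS hy)
          exact (compl_adj G x y).mpr ⟨(ne_of_mem_erase hy.1).symm, hy.2⟩

/-- An infinite play of the game: at each turn the edge built and the color it receives. -/
structure Run (V : Type*) where
  edge : ℕ → Sym2 V
  color : ℕ → Bool

/-- The run in which Builder follows `B` and Painter follows `P`. -/
def play {V : Type*} (B : List Bool → Sym2 V) (P : List Bool → Bool) : Run V where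
  edge t := B (histOf P t)
  color t := P (histOf P t)

/-- The graph of the edges that received color `col` before turn `t`. -/
def Run.colorGraph {V : Type*} (r : Run V) (col : Bool) (t : ℕ) : SimpleGraph V :=
  fromEdgeSet {z | ∃ s < t, r.edge s = z ∧ r.color s = col}

section Run

variable {V : Type*} {r : Run V} {col : Bool} {s t N k : ℕ} {u v : V} {S : Finset V}

lemma Run.colorGraph_adj :
    (r.colorGraph col t).Adj u v ↔ (∃ s < t, r.edge s = s(u, v) ∧ r.color s = col) ∧ u ≠ v :=
  fromEdgeSet_adj _

lemma Run.colorGraph_mono (hst : s ≤ t) : r.colorGraph col s ≤ r.colorGraph col t :=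
  fromEdgeSet_mono fun _ ⟨a, ha, h⟩ => ⟨a, ha.trans_le hst, h⟩

lemma hasMonoClique_iff :
    HasMonoClique r.edge r.color N k col ↔ ∃ S, (r.colorGraph col N).IsNClique k S := by
  simp only [HasMonoClique, isNClique_iff, isClique_iff, Set.Pairwise, mem_coe,
    Run.colorGraph_adj, and_comm (a := #_ = k)]
  refine exists_congr fun S => and_congr_left fun _ => ?_
  exact ⟨fun h u hu v hv huv => ⟨h u hu v hv huv, huv⟩,
    fun h u hu v hv huv => (h hu hv huv).1⟩

end Run

lemma length_histOf (P : List Bool → Bool) (t : ℕ) : (histOf P t).length = t := by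
  induction t with
  | zero => rfl
  | succ t ih => simp [histOf, ih]

lemma exists_edge_enumeration :
    ∃ φ : ℕ → Sym2 ℕ, Function.Injective φ ∧ (∀ t, ¬ (φ t).IsDiag) ∧
      ∀ A : Finset ℕ, ∃ N, ∀ u ∈ A, ∀ v ∈ A, u ≠ v → ∃ t < N, φ t = s(u, v) := by
  have : Infinite {z : Sym2 ℕ // ¬ z.IsDiag} :=
    .of_injective (fun k : ℕ => ⟨s(0, k + 1), by simp⟩) fun a b h => by simpa using h
  obtain ⟨φ⟩ : Nonempty (ℕ ≃ {z : Sym2 ℕ // ¬ z.IsDiag}) := nonempty_equiv_of_countable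
  refine ⟨fun t => φ t, Subtype.val_injective.comp φ.injective, fun t => (φ t).2, fun A => ?_⟩
  obtain ⟨N, hN⟩ :=
    ((A.sym2.subtype fun z : Sym2 ℕ => ¬ z.IsDiag).image φ.symm).exists_nat_subset_range
  refine ⟨N, fun u hu v hv huv => ?_⟩
  have hmem : (⟨s(u, v), by simpa using huv⟩ : {z : Sym2 ℕ // ¬ z.IsDiag}) ∈
      A.sym2.subtype fun z : Sym2 ℕ => ¬ z.IsDiag := by simpa using And.intro hu hv
  exact ⟨_, mem_range.mp (hN (mem_image_of_mem φ.symm hmem)), by simp⟩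

theorem exists_builderWins (m n : ℕ) : ∃ N, BuilderWins m n N := by
  obtain ⟨R, hR⟩ := exists_clique_or_compl_clique (V := ℕ) m n
  obtain ⟨φ, hφ, hdiag, hbuilt⟩ := exists_edge_enumeration
  obtain ⟨N, hN⟩ := hbuilt (range R)
  refine ⟨N, fun h => φ h.length, ⟨fun h => hdiag _, fun h i hi heq => ?_⟩, fun P => ?_⟩
  · have := hφ heq
    rw [List.length_take] at this
    omega
  · set r := play (fun h => φ h.length) P with hr
    have hedge (t : ℕ) : r.edge t = φ t := by simp [hr, play, length_histOf]
    change HasMonoClique r.edge r.color N m true ∨ HasMonoClique r.edge r.color N n false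
    rw [hasMonoClique_iff, hasMonoClique_iff]
    refine (hR (r.colorGraph true N) (range R) (card_range R).ge).imp
      (fun ⟨S, _, hS⟩ => ⟨S, hS⟩) fun ⟨S, hSR, hS⟩ => ⟨S, fun u hu v hv huv => ?_, hS.2⟩
    obtain ⟨t, ht, htuv⟩ := hN u (hSR hu) v (hSR hv) huv
    rw [← hedge] at htuv
    refine Run.colorGraph_adj.mpr ⟨⟨t, ht, htuv, ?_⟩, huv⟩
    refine Bool.eq_false_of_not_eq_true fun hred => (hS.1 hu hv huv).2 ?_
    exact Run.colorGraph_adj.mpr ⟨⟨t, ht, htuv, hred⟩, huv⟩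

/-! ### Painter's derandomized strategy -/

/-- Two runs are indistinguishable when Painter is about to color the edge of turn `t`. -/
structure Run.AgreesUpTo {V : Type*} (r r' : Run V) (t : ℕ) : Prop where
  edge_eq : ∀ s ≤ t, r.edge s = r'.edge s
  color_eq : ∀ s < t, r.color s = r'.color s

/-- An event, depending on the run and on the turn, is predictable if at each turn Painter knows
whether it holds before choosing a color. -/
def Predictable {V : Type*} (E : Run V → ℕ → Prop) : Prop :=
  ∀ ⦃r r' t⦄, Run.AgreesUpTo r r' t → (E r t ↔ E r' t)

/-- The run of Builder's strategy `B` along the history `h`; only its edges up to turn `h.length`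
and its colors before that turn are meaningful. -/
def Run.ofHistory {V : Type*} (B : List Bool → Sym2 V) (h : List Bool) : Run V where
  edge s := B (h.take s)
  color s := h.getD s false

/-- The exponential martingale `λ ^ a / (1 + (λ - 1) p) ^ b` that counts red turns among the turns
at which `E` holds: `a` of the `b` such turns before `t` are red, and `1 + (λ - 1) p` is the
expectation of `λ ^ X` for a Bernoulli variable `X` of parameter `p`. -/
noncomputable def Run.tilt {V : Type*} (r : Run V) (E : Run V → ℕ → Prop) (lam p : ℝ) (t : ℕ) :
    ℝ :=
  lam ^ Nat.count (fun s => E r s ∧ r.color s = true) t / (1 + (lam - 1) * p) ^ Nat.count (E r) t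

section Derandomization

variable {V : Type*} {B : List Bool → Sym2 V} {P : List Bool → Bool} {h : List Bool} {b : Bool}
  {r r' : Run V} {E F : Run V → ℕ → Prop} {lam p : ℝ} {s t : ℕ}

lemma Run.AgreesUpTo.mono (hr : r.AgreesUpTo r' t) (hst : s ≤ t) : r.AgreesUpTo r' s :=
  ⟨fun a ha => hr.edge_eq a (ha.trans hst), fun a ha => hr.color_eq a (ha.trans_le hst)⟩

lemma Run.ofHistory_append_agreesUpTo :
    (ofHistory B (h ++ [b])).AgreesUpTo (ofHistory B h) h.length :=
  ⟨fun s hs => by simp only [ofHistory, List.take_append_of_le_length hs],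
    fun s hs => by simp only [ofHistory, List.getD_append _ _ _ _ hs]⟩

lemma take_histOf (P : List Bool → Bool) (hst : s ≤ t) : (histOf P t).take s = histOf P s := by
  induction t, hst using Nat.le_induction with
  | base => exact List.take_of_length_le (length_histOf P s).le
  | succ t hst ih =>
    rw [histOf, List.take_append_of_le_length (hst.trans_eq (length_histOf P t).symm), ih]

lemma getD_histOf (P : List Bool → Bool) (hst : s < t) :
    (histOf P t).getD s false = P (histOf P s) := by
  induction t, hst using Nat.le_induction with
  | base => simp [histOf, length_histOf]
  | succ t hst ih =>
    rw [histOf, List.getD_append _ _ _ _ (hst.trans_eq (length_histOf P t).symm), ih]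

lemma Run.ofHistory_histOf_agreesUpTo :
    (ofHistory B (histOf P t)).AgreesUpTo (play B P) t :=
  ⟨fun _ hs => congrArg B (take_histOf P hs), fun _ hs => getD_histOf P hs⟩

lemma Run.tilt_succ :
    r.tilt E lam p (t + 1) =
      r.tilt E lam p t *
        if E r t then (if r.color t = true then lam else 1) / (1 + (lam - 1) * p) else 1 := by
  by_cases hE : E r t
  · rw [if_pos hE, tilt, tilt, div_mul_div_comm]
    by_cases hc : r.color t = true <;> simp [Nat.count_succ, hE, hc, pow_succ]
  · simp [tilt, Nat.count_succ, hE]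

lemma Run.AgreesUpTo.tilt_eq (hE : Predictable E) (hr : r.AgreesUpTo r' t) :
    r.tilt E lam p t = r'.tilt E lam p t := by
  induction t with
  | zero => simp [tilt]
  | succ t ih =>
    rw [tilt_succ, tilt_succ, ih (hr.mono t.le_succ), hr.color_eq t t.lt_succ_self]
    simp only [hE (hr.mono t.le_succ)]

lemma Run.tilt_ofHistory_append (hE : Predictable E) :
    (ofHistory B (h ++ [b])).tilt E lam p (h.length + 1) =
      (ofHistory B h).tilt E lam p h.length *
        if E (ofHistory B h) h.length then (if b = true then lam else 1) / (1 + (lam - 1) * p)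
        else 1 := by
  have hcolor : (ofHistory B (h ++ [b])).color h.length = b := by simp [ofHistory]
  rw [tilt_succ, ofHistory_append_agreesUpTo.tilt_eq hE, hcolor]
  simp only [hE ofHistory_append_agreesUpTo]

lemma Run.tilt_ofHistory_average (hE : Predictable E) (hD : 1 + (lam - 1) * p ≠ 0) :
    p * (ofHistory B (h ++ [true])).tilt E lam p (h.length + 1) +
      (1 - p) * (ofHistory B (h ++ [false])).tilt E lam p (h.length + 1) =
        (ofHistory B h).tilt E lam p h.length := by
  rw [tilt_ofHistory_append hE, tilt_ofHistory_append hE]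
  by_cases hEh : E (ofHistory B h) h.length
  · simp only [hEh, if_true, Bool.false_eq_true, if_false]
    rw [mul_left_comm p, mul_left_comm (1 - p), ← mul_add, mul_div_assoc', mul_div_assoc',
      ← add_div, show p * lam + (1 - p) * 1 = 1 + (lam - 1) * p by ring, div_self hD, mul_one]
  · simp only [hEh, if_false]
    ring

lemma exists_painter_of_potential (W : List Bool → ℝ) (A : List Bool → Prop)
    (hW : ∀ h, ∃ b, (b = true → A h) ∧ W (h ++ [b]) ≤ W h) :
    ∃ P : List Bool → Bool, (∀ h, P h = true → A h) ∧ ∀ t, W (histOf P t) ≤ W [] := by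
  choose P hPA hPW using hW
  refine ⟨P, hPA, fun t => ?_⟩
  induction t with
  | zero => rfl
  | succ t ih => exact (hPW _).trans ih

theorem exists_painter_sum_tilt_le {ι : Type*} [Fintype ι] (B : List Bool → Sym2 V)
    (hp0 : 0 ≤ p) (hp1 : p ≤ 1) (hF : Predictable F) {E : ι → Run V → ℕ → Prop}
    (hE : ∀ i, Predictable (E i)) (hEF : ∀ i r t, E i r t → F r t) {lam : ι → ℝ}
    (hD : ∀ i, 1 + (lam i - 1) * p ≠ 0) (w : ι → ℝ) :
    ∃ P : List Bool → Bool, (∀ t, (play B P).color t = true → F (play B P) t) ∧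
      ∀ t, ∑ i, w i * (play B P).tilt (E i) (lam i) p t ≤ ∑ i, w i := by
  let W (h : List Bool) : ℝ := ∑ i, w i * (Run.ofHistory B h).tilt (E i) (lam i) p h.length
  have haverage (h : List Bool) : p * W (h ++ [true]) + (1 - p) * W (h ++ [false]) = W h := by
    simp only [W, mul_sum, ← sum_add_distrib, List.length_append, List.length_singleton]
    refine sum_congr rfl fun i _ => ?_
    rw [← Run.tilt_ofHistory_average (hE i) (hD i)]
    ring
  have hblue (h : List Bool) (hFh : ¬ F (Run.ofHistory B h) h.length) :
      W (h ++ [false]) = W h := by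
    refine sum_congr rfl fun i _ => ?_
    rw [List.length_append, List.length_singleton, Run.tilt_ofHistory_append (hE i),
      if_neg (mt (hEF i _ _) hFh), mul_one]
  obtain ⟨P, hPF, hPW⟩ := exists_painter_of_potential W
      (fun h => F (Run.ofHistory B h) h.length) fun h => by
    by_cases hFh : F (Run.ofHistory B h) h.length
    · by_contra! hgrow
      have htrue := hgrow true fun _ => hFh
      have hfalse := hgrow false fun _ => hFh
      have hmin := lt_min htrue hfalse
      have := mul_le_mul_of_nonneg_left (min_le_left (W (h ++ [true])) (W (h ++ [false]))) hp0
      have := mul_le_mul_of_nonneg_left (min_le_right (W (h ++ [true])) (W (h ++ [false])))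
        (sub_nonneg.2 hp1)
      linarith [haverage h]
    · exact ⟨false, by simp, (hblue h hFh).le⟩
  refine ⟨P, fun t ht => ?_, fun t => ?_⟩
  · have := hPF (histOf P t) ht
    rwa [length_histOf, hF Run.ofHistory_histOf_agreesUpTo] at this
  · have := hPW t
    simp only [W, length_histOf, Run.ofHistory_histOf_agreesUpTo.tilt_eq (hE _)] at this
    simpa [Run.tilt] using this

lemma Run.pow_count_lt_exp {θ : ℝ} (hD : 0 < 1 + (lam - 1) * p)
    (hr : Real.exp (-θ) * r.tilt E lam p t < 1) :
    lam ^ Nat.count (fun s => E r s ∧ r.color s = true) t <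
      Real.exp (θ + (lam - 1) * (p * Nat.count (E r) t)) := by
  rw [tilt, Real.exp_neg, inv_mul_lt_one₀ (Real.exp_pos θ), div_lt_iff₀ (pow_pos hD _)] at hr
  refine hr.trans_le ?_
  rw [Real.exp_add, show (lam - 1) * (p * Nat.count (E r) t) =
    Nat.count (E r) t * ((lam - 1) * p) by ring, Real.exp_nat_mul]
  gcongr
  linarith [Real.add_one_le_exp ((lam - 1) * p)]

/-- The potential sums two tilts per event: `λ = 0` penalizes many turns of the event without a
red one among them, and `λ = 2` penalizes too many red ones. -/
theorem exists_painter_deviation_lt {ι : Type*} [Fintype ι] (B : List Bool → Sym2 V)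
    (hp0 : 0 ≤ p) (hp1 : p < 1) (hF : Predictable F) {E : ι → Run V → ℕ → Prop}
    (hE : ∀ i, Predictable (E i)) (hEF : ∀ i r t, E i r t → F r t) {θ : ι → ℝ}
    (hθ : ∑ i, Real.exp (-θ i) < 1 / 2) :
    ∃ P : List Bool → Bool, (∀ t, (play B P).color t = true → F (play B P) t) ∧ ∀ i t,
      ((∀ s < t, E i (play B P) s → (play B P).color s = false) →
        p * Nat.count (E i (play B P)) t < θ i) ∧
      Nat.count (fun s => E i (play B P) s ∧ (play B P).color s = true) t <
        2 * (p * Nat.count (E i (play B P)) t + θ i) := by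
  let lam (j : ι × Bool) : ℝ := if j.2 = true then 2 else 0
  have hlam (j : ι × Bool) : 0 ≤ lam j := by simp only [lam]; split_ifs <;> norm_num
  have hD (j : ι × Bool) : 0 < 1 + (lam j - 1) * p := by
    simp only [lam]; split_ifs <;> linarith
  obtain ⟨P, hPF, hP⟩ := exists_painter_sum_tilt_le B hp0 hp1.le hF
    (fun j : ι × Bool => hE j.1) (fun j => hEF j.1) (fun j => (hD j).ne')
    fun j => Real.exp (-θ j.1)
  have htilt (j : ι × Bool) (t : ℕ) :
      Real.exp (-θ j.1) * (play B P).tilt (E j.1) (lam j) p t < 1 := by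
    refine (single_le_sum (fun j _ => ?_) (mem_univ j)).trans_lt ((hP t).trans_lt ?_)
    · exact mul_nonneg (Real.exp_pos _).le
        (div_nonneg (pow_nonneg (hlam j) _) (pow_nonneg (hD j).le _))
    · simp only [Fintype.sum_prod_type, Fintype.sum_bool, ← two_mul, ← mul_sum]
      linarith
  refine ⟨P, hPF, fun i t => ⟨fun hblue => ?_, ?_⟩⟩
  · have hred : Nat.count (fun s => E i (play B P) s ∧ (play B P).color s = true) t = 0 :=
      Nat.count_iff_forall_not.mpr fun s hs hEs => by simp [hblue s hs hEs.1] at hEs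
    have := Run.pow_count_lt_exp (hD (i, false)) (htilt (i, false) t)
    rw [hred, pow_zero, Real.one_lt_exp_iff] at this
    simp only [lam, Bool.false_eq_true, if_false] at this
    linarith
  · have := Run.pow_count_lt_exp (hD (i, true)) (htilt (i, true) t)
    simp only [lam, if_true] at this
    rw [← Real.log_lt_iff_lt_exp (by positivity), Real.log_pow] at this
    have hlog : (1 : ℝ) / 2 < Real.log 2 := by linarith [Real.log_two_gt_d9]
    nlinarith [(Nat.count (fun s => E i (play B P) s ∧
      (play B P).color s = true) t).cast_nonneg (α := ℝ)]

end Derandomization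

/-! ### Free turns and labels -/

/-- The number of edges at `v` built before turn `t`. -/
noncomputable def Run.deg {V : Type*} (r : Run V) (t : ℕ) (v : V) : ℕ :=
  Nat.count (fun s => v ∈ r.edge s) t

/-- Turn `t` is free if both ends of its edge already have degree at least `d` and coloring this
edge red would not close a red triangle; Painter colors all other edges blue. -/
def Run.IsFree {V : Type*} (d : ℕ) (r : Run V) (t : ℕ) : Prop :=
  (∀ v ∈ r.edge t, d ≤ r.deg t v) ∧ ¬ ∃ w, ∀ v ∈ r.edge t, (r.colorGraph true t).Adj w v

/-- The vertices that occur in the edges of the first `N` turns. -/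
noncomputable def Run.touched {V : Type*} (r : Run V) (N : ℕ) : Finset V :=
  (range N).biUnion fun t => (r.edge t).toFinset

/-- The vertices of degree at least `d` after `N` turns. -/
noncomputable def Run.heavy {V : Type*} (r : Run V) (N d : ℕ) : Finset V :=
  {v ∈ r.touched N | d ≤ r.deg N v}

/-- A name, given in advance, for a vertex of the first `N` edges of an unknown run: the turn of an
edge and one of its two ends. Unlike the vertices, labels are finite in number. -/
abbrev Label (N : ℕ) : Type := Fin N × Bool

/-- The vertex that a label denotes in a given run. -/
noncomputable def Run.vert {V : Type*} {N : ℕ} (r : Run V) (l : Label N) : V :=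
  if l.2 = true then (r.edge l.1).out.1 else (r.edge l.1).out.2

/-- The edge of turn `t` has an end labelled by `l`, as far as is known at turn `t`. -/
def Run.Touches {V : Type*} {N : ℕ} (l : Label N) (r : Run V) (t : ℕ) : Prop :=
  (l.1 : ℕ) ≤ t ∧ r.vert l ∈ r.edge t

/-- Both ends of the edge of turn `t` are labelled by values of `f`, as far as is known at
turn `t`. -/
def Run.IsInside {V : Type*} {N k : ℕ} (f : Fin k → Label N) (r : Run V) (t : ℕ) : Prop :=
  ∀ v ∈ r.edge t, ∃ i, ((f i).1 : ℕ) ≤ t ∧ r.vert (f i) = v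

section Labels

variable {V : Type*} {r r' : Run V} {N d k s t : ℕ} {v : V} {S : Finset V}

lemma Run.mem_touched : v ∈ r.touched N ↔ ∃ t < N, v ∈ r.edge t := by
  simp [touched, Sym2.mem_toFinset]

lemma Run.AgreesUpTo.deg_eq (hr : r.AgreesUpTo r' t) (v : V) : r.deg t v = r'.deg t v := by
  simp only [Run.deg, Nat.count_eq_card_filter_range]
  exact congrArg card (filter_congr fun s hs => by rw [hr.edge_eq s (mem_range.mp hs).le])

lemma Run.AgreesUpTo.colorGraph_eq (hr : r.AgreesUpTo r' t) (col : Bool) :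
    r.colorGraph col t = r'.colorGraph col t := by
  refine congrArg fromEdgeSet (Set.ext fun z => exists_congr fun s => and_congr_right fun hs => ?_)
  rw [hr.edge_eq s hs.le, hr.color_eq s hs]

lemma predictable_isFree : Predictable (Run.IsFree (V := V) d) := fun r r' t hr => by
  simp only [Run.IsFree, hr.deg_eq, hr.colorGraph_eq, hr.edge_eq t le_rfl]

lemma Run.AgreesUpTo.vert_eq (hr : r.AgreesUpTo r' t) {l : Label N} (hl : (l.1 : ℕ) ≤ t) :
    r.vert l = r'.vert l := by
  simp only [vert, hr.edge_eq _ hl]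

lemma predictable_touches (l : Label N) : Predictable (Run.Touches (V := V) l) :=
  fun r r' t hr => and_congr_right fun hl => by rw [hr.vert_eq hl, hr.edge_eq t le_rfl]

lemma predictable_isInside (f : Fin k → Label N) : Predictable (Run.IsInside (V := V) f) :=
  fun r r' t hr => by
    rw [Run.IsInside, Run.IsInside, hr.edge_eq t le_rfl]
    exact forall₂_congr fun v _ => exists_congr fun i => and_congr_right fun hi => by
      rw [hr.vert_eq hi]

lemma Predictable.and {E F : Run V → ℕ → Prop} (hE : Predictable E) (hF : Predictable F) :
    Predictable fun r t => E r t ∧ F r t :=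
  fun _ _ _ hr => and_congr (hE hr) (hF hr)

lemma Run.exists_label (hv : v ∈ r.touched N) :
    ∃ l : Label N, r.vert l = v ∧ ∀ t, v ∈ r.edge t → (l.1 : ℕ) ≤ t := by
  have hex := mem_touched.mp hv
  have hmem : ∃ t, v ∈ r.edge t := hex.imp fun t ht => ht.2
  have hfirst : Nat.find hmem < N := by
    obtain ⟨t, ht, hvt⟩ := hex
    exact (Nat.find_min' hmem hvt).trans_lt ht
  have hout : v = (r.edge (Nat.find hmem)).out.1 ∨ v = (r.edge (Nat.find hmem)).out.2 := by
    have := Nat.find_spec hmem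
    rwa [← Quot.out_eq (r.edge (Nat.find hmem)), ← Prod.mk.eta (p := Quot.out _),
      ← Sym2.mk, Sym2.mem_iff] at this
  rcases hout with h | h
  · exact ⟨(⟨_, hfirst⟩, true), by simpa [vert] using h.symm, fun t ht => Nat.find_min' hmem ht⟩
  · exact ⟨(⟨_, hfirst⟩, false), by simpa [vert] using h.symm, fun t ht => Nat.find_min' hmem ht⟩

lemma Run.exists_touches_iff (hv : v ∈ r.touched N) :
    ∃ l : Label N, ∀ t, Touches l r t ↔ v ∈ r.edge t := by
  obtain ⟨l, hl, hfirst⟩ := exists_label hv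
  exact ⟨l, fun t => ⟨fun h => hl ▸ h.2, fun h => ⟨hfirst t h, hl.symm ▸ h⟩⟩⟩

lemma Run.exists_isInside_iff (hS : S ⊆ r.touched N) (hne : S.Nonempty) (hk : #S ≤ k) :
    ∃ f : Fin k → Label N, ∀ t, IsInside f r t ↔ r.edge t ∈ S.sym2 := by
  have : Nonempty S := hne.to_subtype
  obtain ⟨e⟩ : Nonempty (S ↪ Fin k) := Function.Embedding.nonempty_of_card_le (by simpa using hk)
  choose l hl hfirst using fun v : S => exists_label (hS v.2)
  refine ⟨l ∘ Function.invFun e, fun t => ?_⟩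
  rw [mem_sym2_iff]
  refine forall₂_congr fun v hv => ⟨?_, fun hvS => ?_⟩
  · rintro ⟨i, -, rfl⟩
    rw [Function.comp_apply, hl]
    exact Subtype.prop _
  · obtain ⟨i, hi⟩ := Function.invFun_surjective e.injective ⟨v, hvS⟩
    refine ⟨i, ?_⟩
    rw [Function.comp_apply, hi]
    exact ⟨hfirst _ t hv, hl _⟩

end Labels

/-! ### Typical runs -/

/-- The runs in which Builder obeys the rules of the game: no edge is built twice, and no loop is
built. -/
structure Run.IsSimple {V : Type*} (r : Run V) : Prop where
  edge_injective : Function.Injective r.edge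
  not_isDiag : ∀ t, ¬ (r.edge t).IsDiag

/-- The runs that Painter can enforce: red edges are built at free turns only, and red turns are
about as frequent as coin flips of bias `p` would make them among the free turns inside each small
vertex set and among the free turns at each vertex. -/
structure Run.IsTypical {V : Type*} (r : Run V) (N d k : ℕ) (p θ₁ θ₂ : ℝ) : Prop where
  isFree_of_red : ∀ t, r.color t = true → IsFree d r t
  free_inside_lt : ∀ S ⊆ r.touched N, S.Nonempty → #S ≤ k →
    (∀ t < N, r.edge t ∈ S.sym2 → r.color t = false) →
      p * Nat.count (fun t => IsFree d r t ∧ r.edge t ∈ S.sym2) N < θ₁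
  red_inside_lt : ∀ S ⊆ r.touched N, S.Nonempty → #S ≤ k →
    (Nat.count (fun t => r.edge t ∈ S.sym2 ∧ r.color t = true) N : ℝ) <
      2 * (p * Nat.count (fun t => IsFree d r t ∧ r.edge t ∈ S.sym2) N + θ₁)
  red_at_lt : ∀ v ∈ r.touched N,
    (Nat.count (fun t => v ∈ r.edge t ∧ r.color t = true) N : ℝ) <
      2 * (p * Nat.count (fun t => IsFree d r t ∧ v ∈ r.edge t) N + θ₂)

section Typical

variable {V : Type*} {B : List Bool → Sym2 V} {N d k : ℕ} {p θ₁ θ₂ : ℝ}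

lemma play_isSimple (hB : ValidBuilder B) (P : List Bool → Bool) : (play B P).IsSimple := by
  have hne {s t : ℕ} (hst : s < t) : (play B P).edge s ≠ (play B P).edge t := by
    have := hB.2 (histOf P t) s (by rwa [length_histOf])
    rwa [take_histOf P hst.le] at this
  refine ⟨fun s t hst => ?_, fun t => hB.1 _⟩
  by_contra h
  exact (Ne.lt_or_gt h).elim (hne · hst) (hne · hst.symm)

theorem exists_painter_isTypical (B : List Bool → Sym2 V) (hp0 : 0 ≤ p) (hp1 : p < 1)
    (hθ : (2 * N : ℝ) ^ k * Real.exp (-θ₁) + 2 * N * Real.exp (-θ₂) < 1 / 2) :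
    ∃ P, (play B P).IsTypical N d k p θ₁ θ₂ := by
  let E : (Fin k → Label N) ⊕ Label N → Run V → ℕ → Prop :=
    Sum.elim (fun f r t => Run.IsFree d r t ∧ Run.IsInside f r t)
      (fun l r t => Run.IsFree d r t ∧ Run.Touches l r t)
  have hE : ∀ i, Predictable (E i) := by
    rintro (f | l)
    · exact predictable_isFree.and (predictable_isInside f)
    · exact predictable_isFree.and (predictable_touches l)
  have hEF : ∀ i r t, E i r t → Run.IsFree d r t := by
    rintro (f | l) r t h
    exacts [h.1, h.1]
  obtain ⟨P, hfree, hP⟩ := exists_painter_deviation_lt B hp0 hp1 predictable_isFree hE hEF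
    (θ := Sum.elim (fun _ => θ₁) fun _ => θ₂) (by
      simpa [Fintype.sum_sum_type, Fintype.card_pi, mul_comm (N : ℝ) 2] using hθ)
  have hred (A : ℕ → Prop) :
      (fun t => (Run.IsFree d (play B P) t ∧ A t) ∧ (play B P).color t = true) =
        fun t => A t ∧ (play B P).color t = true := by
    funext t
    exact propext ⟨fun h => ⟨h.1.2, h.2⟩, fun h => ⟨⟨hfree t h.2, h.1⟩, h.2⟩⟩
  refine ⟨P, hfree, fun S hS hne hk hblue => ?_, fun S hS hne hk => ?_, fun v hv => ?_⟩
  · obtain ⟨f, hf⟩ := Run.exists_isInside_iff hS hne hk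
    have := (hP (.inl f) N).1 fun t ht h => hblue t ht ((hf t).1 h.2)
    simpa only [E, Sum.elim_inl, hf] using this
  · obtain ⟨f, hf⟩ := Run.exists_isInside_iff hS hne hk
    have := (hP (.inl f) N).2
    simpa only [E, Sum.elim_inl, hf, hred] using this
  · obtain ⟨l, hl⟩ := Run.exists_touches_iff hv
    have := (hP (.inr l) N).2
    simpa only [E, Sum.elim_inr, hl, hred] using this

end Typical

/-! ### Counting turns -/

/-- The number of neighbors of `w` in `S`. -/
noncomputable def degIn {V : Type*} (G : SimpleGraph V) (S : Finset V) (w : V) : ℕ :=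
  #{u ∈ S | G.Adj w u}

section Counting

variable {V : Type*} {r : Run V} {N d t : ℕ} {u v w : V} {S W : Finset V} {q : ℕ → Prop}
  {col : Bool} {A : Finset (Sym2 V)}

lemma sum_sq_le_of_forall_sum_lt {ι : Type*} {H : Finset ι} {f : ι → ℝ} {n : ℕ}
    {Δ κ : ℝ} (hf : ∀ i ∈ H, 0 ≤ f i) (hΔ : 0 ≤ Δ) (hfΔ : ∀ i ∈ H, f i ≤ Δ)
    (hsum : ∀ W ⊆ H, #W ≤ n → ∑ i ∈ W, f i < n * κ) :
    ∑ i ∈ H, f i ^ 2 ≤ Δ * (n * κ) + #H * κ ^ 2 := by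
  let W := {i ∈ H | κ ≤ f i}
  have hWH : W ⊆ H := filter_subset _ H
  have hW : #W ≤ n := by
    by_contra! hn
    obtain ⟨T, hTW, hT⟩ := exists_subset_card_eq hn.le
    have := card_nsmul_le_sum T f κ fun i hi => (mem_filter.mp (hTW hi)).2
    rw [hT, nsmul_eq_mul] at this
    exact this.not_gt (hsum T (hTW.trans hWH) hT.le)
  have hlarge : ∑ i ∈ W, f i ^ 2 ≤ Δ * (n * κ) := calc
    ∑ i ∈ W, f i ^ 2 ≤ ∑ i ∈ W, Δ * f i := sum_le_sum fun i hi => by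
      rw [sq]
      exact mul_le_mul_of_nonneg_right (hfΔ i (hWH hi)) (hf i (hWH hi))
    _ = Δ * ∑ i ∈ W, f i := (mul_sum ..).symm
    _ ≤ Δ * (n * κ) := mul_le_mul_of_nonneg_left (hsum W hWH hW).le hΔ
  have hsmall : ∑ i ∈ H with ¬ κ ≤ f i, f i ^ 2 ≤ #H * κ ^ 2 := calc
    ∑ i ∈ H with ¬ κ ≤ f i, f i ^ 2 ≤ #{i ∈ H | ¬ κ ≤ f i} • κ ^ 2 :=
      sum_le_card_nsmul _ _ _ fun i hi =>
        pow_le_pow_left₀ (hf i (mem_filter.mp hi).1) (not_le.mp (mem_filter.mp hi).2).le 2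
    _ ≤ #H * κ ^ 2 := by
      rw [nsmul_eq_mul]
      gcongr
      exact filter_subset _ H
  rw [← sum_filter_add_sum_filter_not H (fun i => κ ≤ f i)]
  exact add_le_add hlarge hsmall

lemma count_and_count_lt_le (q : ℕ → Prop) [DecidablePred q] (d N : ℕ) :
    Nat.count (fun t => q t ∧ Nat.count q t < d) N ≤ d := by
  rw [Nat.count_eq_card_filter_range]
  calc #{t ∈ range N | q t ∧ Nat.count q t < d} ≤ #(range d) :=
        card_le_card_of_injOn (Nat.count q)
          (fun t ht => by simpa using (mem_filter.mp ht).2.2)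
          fun s hs t ht => Nat.count_injective (mem_filter.mp hs).2.1 (mem_filter.mp ht).2.1
    _ = d := card_range d

lemma Run.card_le_count [DecidablePred q] (r : Run V) (h : ∀ z ∈ A, ∃ t < N, r.edge t = z ∧ q t) :
    #A ≤ Nat.count q N := by
  rw [Nat.count_eq_card_filter_range]
  refine (card_le_card fun z hz => ?_).trans (card_image_le (f := r.edge))
  obtain ⟨t, ht, htz, hq⟩ := h z hz
  exact mem_image.mpr ⟨t, mem_filter.mpr ⟨mem_range.mpr ht, hq⟩, htz⟩

lemma Run.IsSimple.count_le_card [DecidablePred q] (hr : r.IsSimple)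
    (h : ∀ t < N, q t → r.edge t ∈ A) :
    Nat.count q N ≤ #A := by
  rw [Nat.count_eq_card_filter_range]
  refine card_le_card_of_injOn r.edge (fun t ht => ?_) hr.edge_injective.injOn
  exact h t (mem_range.mp (mem_filter.mp ht).1) (mem_filter.mp ht).2

lemma Run.card_heavy_mul_le (r : Run V) (N d : ℕ) : #(r.heavy N d) * d ≤ 2 * N := by
  suffices #(r.heavy N d) * d ≤ #(range N) * 2 by rwa [card_range, mul_comm N] at this
  refine card_mul_le_card_mul (fun v t => v ∈ r.edge t) (fun v hv => ?_) fun t _ => ?_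
  · rw [bipartiteAbove, ← Nat.count_eq_card_filter_range]
    exact (mem_filter.mp hv).2
  · rw [bipartiteBelow]
    calc #{v ∈ r.heavy N d | v ∈ r.edge t} ≤ #(r.edge t).toFinset :=
          card_le_card fun v hv => Sym2.mem_toFinset.mpr (mem_filter.mp hv).2
      _ ≤ 2 := by rw [Sym2.card_toFinset]; split_ifs <;> norm_num

lemma Run.IsFree.mem_heavy (hfree : IsFree d r t) (ht : t < N) (hv : v ∈ r.edge t) :
    v ∈ r.heavy N d :=
  mem_filter.mpr ⟨mem_touched.mpr ⟨t, ht, hv⟩,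
    (hfree.1 v hv).trans (Nat.count_monotone _ ht.le)⟩

lemma Run.IsSimple.count_free_at_le (hr : r.IsSimple) (v : V) :
    Nat.count (fun t => IsFree d r t ∧ v ∈ r.edge t) N ≤ #(r.heavy N d) := by
  refine (hr.count_le_card (A := (r.heavy N d).image fun u => s(v, u)) ?_).trans card_image_le
  rintro t ht ⟨hfree, hv⟩
  obtain ⟨u, hu⟩ := Sym2.mem_iff_exists.mp hv
  exact mem_image.mpr ⟨u, hfree.mem_heavy ht (by simp [hu]), hu.symm⟩

lemma Run.IsSimple.count_free_inside_le (hr : r.IsSimple) (S : Finset V) :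
    Nat.count (fun t => IsFree d r t ∧ r.edge t ∈ S.sym2) N ≤ (#S + 1).choose 2 :=
  (hr.count_le_card fun _ _ h => h.2).trans_eq (card_sym2 S)

lemma Run.degIn_le_count :
    degIn (r.colorGraph col N) S w ≤
      Nat.count (fun t => w ∈ r.edge t ∧ r.color t = col) N := by
  rw [degIn, ← card_image_of_injective _ (fun a b => Sym2.congr_right.mp : (s(w, ·)).Injective)]
  refine r.card_le_count fun z hz => ?_
  obtain ⟨u, hu, rfl⟩ := mem_image.mp hz
  obtain ⟨⟨t, ht, hedge, hcol⟩, -⟩ := colorGraph_adj.mp (mem_filter.mp hu).2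
  exact ⟨t, ht, hedge, by simp [hedge], hcol⟩

lemma Run.sum_degIn_le_count (hS : ∀ t < N, r.edge t ∈ S.sym2 → r.color t ≠ col) :
    ∑ w ∈ W, degIn (r.colorGraph col N) S w ≤
      Nat.count (fun t => r.edge t ∈ (S ∪ W).sym2 ∧ r.color t = col) N := by
  let A := W.sigma fun w => {u ∈ S | (r.colorGraph col N).Adj w u}
  have hA {x} (hx : x ∈ A) : x.1 ∈ W ∧ x.2 ∈ S ∧ ∃ t < N, r.edge t = s(x.1, x.2) ∧
      r.color t = col := by
    obtain ⟨hW, hx⟩ := mem_sigma.mp hx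
    obtain ⟨hS, hadj⟩ := mem_filter.mp hx
    exact ⟨hW, hS, (colorGraph_adj.mp hadj).1⟩
  have hinj : Set.InjOn (fun x : (_ : V) × V => s(x.1, x.2)) A := by
    rintro ⟨w, u⟩ hx ⟨w', u'⟩ hx' heq
    obtain ⟨-, hu, t, ht, hedge, hcol⟩ := hA hx
    obtain ⟨-, hu', -⟩ := hA hx'
    rcases Sym2.eq_iff.mp heq with ⟨rfl, rfl⟩ | ⟨rfl, rfl⟩
    · rfl
    · exact absurd hcol (hS t ht (by simpa [hedge] using ⟨hu', hu⟩))
  unfold degIn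
  rw [← card_sigma, ← card_image_of_injOn hinj]
  refine r.card_le_count fun z hz => ?_
  obtain ⟨x, hx, rfl⟩ := mem_image.mp hz
  obtain ⟨hxW, hxS, t, ht, hedge, hcol⟩ := hA hx
  exact ⟨t, ht, hedge, by simp [hedge, hxW, hxS], hcol⟩

end Counting

/-! ### Cliques in simple runs -/

section Cliques

variable {V : Type*} {r : Run V} {N d k n t : ℕ} {u v w : V} {S W : Finset V} {col : Bool}
  {p θ₁ θ₂ κ Δ : ℝ}

lemma Run.colorGraph_succ_adj (h : (r.colorGraph col (t + 1)).Adj u v) :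
    (r.colorGraph col t).Adj u v ∨ r.edge t = s(u, v) ∧ r.color t = col := by
  obtain ⟨⟨s, hs, hedge, hcol⟩, hne⟩ := colorGraph_adj.mp h
  rcases Nat.lt_succ_iff_lt_or_eq.mp hs with hs | rfl
  · exact .inl (colorGraph_adj.mpr ⟨⟨s, hs, hedge, hcol⟩, hne⟩)
  · exact .inr ⟨hedge, hcol⟩

lemma Run.colorGraph_cliqueFree_three (hred : ∀ t, r.color t = true → IsFree d r t) :
    (r.colorGraph true N).CliqueFree 3 := by
  induction N with
  | zero =>
    intro T hT
    obtain ⟨a, b, c, hab, -⟩ := is3Clique_iff.mp hT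
    obtain ⟨⟨s, hs, -⟩, -⟩ := colorGraph_adj.mp hab
    exact absurd hs s.not_lt_zero
  | succ N ih =>
    have hnew {a b c : V} (hac : (r.colorGraph true (N + 1)).Adj a c)
        (hbc : (r.colorGraph true (N + 1)).Adj b c) (hab : a ≠ b) :
        ¬ (r.edge N = s(a, b) ∧ r.color N = true) := by
      rintro ⟨hedge, hcol⟩
      have hca := (colorGraph_succ_adj hac).resolve_right fun h => by
        simpa [hab.symm, hbc.ne, hbc.ne'] using hedge.symm.trans h.1
      have hcb := (colorGraph_succ_adj hbc).resolve_right fun h => by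
        simpa [hab, hab.symm, hac.ne, hac.ne'] using hedge.symm.trans h.1
      exact (hred N hcol).2 ⟨c, by simp [hedge, hca.symm, hcb.symm]⟩
    intro T hT
    obtain ⟨a, b, c, hab, hac, hbc, -⟩ := is3Clique_iff.mp hT
    refine ih {a, b, c} (is3Clique_triple_iff.mpr ⟨?_, ?_, ?_⟩)
    · exact (colorGraph_succ_adj hab).resolve_right (hnew hac hbc hab.ne)
    · exact (colorGraph_succ_adj hac).resolve_right (hnew hab hbc.symm hac.ne)
    · exact (colorGraph_succ_adj hbc).resolve_right (hnew hab.symm hac.symm hbc.ne)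

lemma Run.IsSimple.color_eq_of_isClique (hr : r.IsSimple)
    (hS : (r.colorGraph col N).IsClique S) (ht : r.edge t ∈ S.sym2) : r.color t = col := by
  have hdiag := hr.not_isDiag t
  generalize hz : r.edge t = z at ht hdiag
  induction z with
  | h u v =>
    rw [mk_mem_sym2_iff] at ht
    obtain ⟨⟨s, -, hedge, hcol⟩, -⟩ := colorGraph_adj.mp (hS ht.1 ht.2 (by simpa using hdiag))
    rwa [← hr.edge_injective (hedge.trans hz.symm)]

lemma Run.choose_two_le_count_inside (hS : (r.colorGraph col N).IsClique S) :
    (#S).choose 2 ≤ Nat.count (fun t => r.edge t ∈ S.sym2) N := by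
  rw [← Sym2.card_image_offDiag]
  refine r.card_le_count fun z hz => ?_
  obtain ⟨⟨u, v⟩, huv, rfl⟩ := mem_image.mp hz
  obtain ⟨hu, hv, hne⟩ := mem_offDiag.mp huv
  obtain ⟨⟨t, ht, hedge, -⟩, -⟩ := colorGraph_adj.mp (hS hu hv hne)
  exact ⟨t, ht, hedge, by rw [hedge]; exact mk_mem_sym2_iff.mpr ⟨hu, hv⟩⟩

lemma Run.subset_touched_of_isClique (hS : (r.colorGraph col N).IsClique S) (hcard : 1 < #S) :
    S ⊆ r.touched N := fun u hu => by
  obtain ⟨v, hv, hvu⟩ := exists_mem_ne hcard u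
  obtain ⟨⟨t, ht, hedge, -⟩, -⟩ := colorGraph_adj.mp (hS hu hv hvu.symm)
  exact mem_touched.mpr ⟨t, ht, by simp [hedge]⟩

lemma Run.IsSimple.count_inside_neighbors_le (hr : r.IsSimple) (G : SimpleGraph V) :
    Nat.count (fun t => ∀ u ∈ r.edge t, u ∈ S ∧ G.Adj w u) N ≤ degIn G S w ^ 2 := by
  let R := {u ∈ S | G.Adj w u}
  calc Nat.count (fun t => ∀ u ∈ r.edge t, u ∈ S ∧ G.Adj w u) N
      ≤ #((R ×ˢ R).image (Function.uncurry Sym2.mk)) := hr.count_le_card fun t _ ht => by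
        generalize r.edge t = z at ht
        induction z with
        | h u v =>
          refine mem_image.mpr ⟨(u, v), mem_product.mpr ⟨?_, ?_⟩, rfl⟩
          · exact mem_filter.mpr (ht u (Sym2.mem_mk_left u v))
          · exact mem_filter.mpr (ht v (Sym2.mem_mk_right u v))
    _ ≤ degIn G S w ^ 2 := card_image_le.trans_eq (by rw [card_product, sq, degIn])

/-- A turn inside `S` that is not free either meets a vertex whose degree is still below `d`, or
would close a red triangle; the third vertex of the triangle is then heavy. -/
theorem Run.IsSimple.count_inside_le (hr : r.IsSimple)
    (hred : ∀ t, r.color t = true → IsFree d r t) (S : Finset V) :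
    Nat.count (fun t => r.edge t ∈ S.sym2) N ≤
      #S * d + ∑ w ∈ r.heavy N d, degIn (r.colorGraph true N) S w ^ 2 +
        Nat.count (fun t => IsFree d r t ∧ r.edge t ∈ S.sym2) N := by
  let G := r.colorGraph true N
  let light (v : V) : Finset ℕ := {t ∈ range N | v ∈ r.edge t ∧ r.deg t v < d}
  let closing (w : V) : Finset ℕ := {t ∈ range N | ∀ u ∈ r.edge t, u ∈ S ∧ G.Adj w u}
  have hlight (v : V) : #(light v) ≤ d := by
    rw [← Nat.count_eq_card_filter_range]
    exact count_and_count_lt_le (v ∈ r.edge ·) d N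
  have hclosing (w : V) : #(closing w) ≤ degIn G S w ^ 2 := by
    rw [← Nat.count_eq_card_filter_range]
    exact hr.count_inside_neighbors_le G
  have hcover : {t ∈ range N | r.edge t ∈ S.sym2} ⊆
      S.biUnion light ∪ (r.heavy N d).biUnion closing ∪
        {t ∈ range N | IsFree d r t ∧ r.edge t ∈ S.sym2} := by
    intro t ht
    obtain ⟨htN, htS⟩ := mem_filter.mp ht
    have hmono : r.colorGraph true t ≤ G := colorGraph_mono (mem_range.mp htN).le
    rw [mem_sym2_iff] at htS
    simp only [mem_union, mem_biUnion]
    by_cases hdeg : ∀ v ∈ r.edge t, d ≤ r.deg t v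
    · by_cases hclose : ∃ w, ∀ v ∈ r.edge t, (r.colorGraph true t).Adj w v
      · obtain ⟨w, hw⟩ := hclose
        refine .inl (.inr ⟨w, ?_, mem_filter.mpr ⟨htN, fun u hu => ⟨htS u hu, hmono (hw u hu)⟩⟩⟩)
        obtain ⟨⟨s, hs, hedge, hcol⟩, -⟩ := colorGraph_adj.mp (hmono (hw _ (Sym2.out_fst_mem _)))
        exact (hred s hcol).mem_heavy hs (by simp [hedge])
      · exact .inr (mem_filter.mpr ⟨htN, ⟨hdeg, hclose⟩, mem_sym2_iff.mpr htS⟩)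
    · push Not at hdeg
      obtain ⟨v, hv, hvd⟩ := hdeg
      exact .inl (.inl ⟨v, htS v hv, mem_filter.mpr ⟨htN, hv, hvd⟩⟩)
  rw [Nat.count_eq_card_filter_range, Nat.count_eq_card_filter_range]
  refine (card_le_card hcover).trans ((card_union_le _ _).trans ?_)
  gcongr
  refine (card_union_le _ _).trans (add_le_add ?_ ?_)
  · exact card_biUnion_le_card_mul S light d fun v _ => hlight v
  · exact card_biUnion_le.trans (sum_le_sum fun w _ => hclosing w)

lemma Run.IsTypical.degIn_le (hT : r.IsTypical N d k p θ₁ θ₂) (hr : r.IsSimple) (hp : 0 ≤ p)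
    (S : Finset V) (hw : w ∈ r.heavy N d) :
    (degIn (r.colorGraph true N) S w : ℝ) ≤ 2 * (p * #(r.heavy N d) + θ₂) := calc
  (degIn (r.colorGraph true N) S w : ℝ)
    ≤ Nat.count (fun t => w ∈ r.edge t ∧ r.color t = true) N := Nat.cast_le.mpr degIn_le_count
  _ ≤ 2 * (p * Nat.count (fun t => IsFree d r t ∧ w ∈ r.edge t) N + θ₂) :=
    (hT.red_at_lt w (filter_subset _ _ hw)).le
  _ ≤ 2 * (p * #(r.heavy N d) + θ₂) := by
    gcongr
    exact hr.count_free_at_le w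

lemma Run.IsTypical.sum_degIn_lt (hT : r.IsTypical N d k p θ₁ θ₂) (hr : r.IsSimple) (hp : 0 ≤ p)
    (hblue : ∀ t < N, r.edge t ∈ S.sym2 → r.color t = false) (hS : S ⊆ r.touched N)
    (hne : S.Nonempty) (hW : W ⊆ r.touched N) (hk : #(S ∪ W) ≤ k) :
    ∑ w ∈ W, (degIn (r.colorGraph true N) S w : ℝ) < 2 * (p * (k + 1).choose 2 + θ₁) := calc
  ∑ w ∈ W, (degIn (r.colorGraph true N) S w : ℝ)
    ≤ Nat.count (fun t => r.edge t ∈ (S ∪ W).sym2 ∧ r.color t = true) N := by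
      rw [← Nat.cast_sum]
      exact Nat.cast_le.mpr (sum_degIn_le_count fun t ht hmem => by simp [hblue t ht hmem])
  _ < 2 * (p * Nat.count (fun t => IsFree d r t ∧ r.edge t ∈ (S ∪ W).sym2) N + θ₁) :=
    hT.red_inside_lt _ (union_subset hS hW) (hne.mono subset_union_left) hk
  _ ≤ 2 * (p * (k + 1).choose 2 + θ₁) := by
    gcongr
    exact (hr.count_free_inside_le _).trans (Nat.choose_le_choose 2 (by omega))

theorem Run.IsTypical.choose_two_le (hT : r.IsTypical N d (2 * n) p θ₁ θ₂) (hr : r.IsSimple)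
    (hS : (r.colorGraph false N).IsNClique n S) (hn : 2 ≤ n) (hp : 0 < p) (hθ₂ : 0 ≤ θ₂)
    (hκ : 2 * (p * (2 * n + 1).choose 2 + θ₁) ≤ n * κ)
    (hΔ : 2 * (p * #(r.heavy N d) + θ₂) ≤ Δ) :
    (n.choose 2 : ℝ) ≤ n * d + (Δ * (n * κ) + #(r.heavy N d) * κ ^ 2) + θ₁ / p := by
  have hcard : #S = n := hS.2
  have hblue (t : ℕ) (_ : t < N) (ht : r.edge t ∈ S.sym2) : r.color t = false :=
    hr.color_eq_of_isClique hS.1 ht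
  have hne : S.Nonempty := card_pos.mp (by omega)
  have htouched : S ⊆ r.touched N := subset_touched_of_isClique hS.1 (by omega)
  have hfree : (Nat.count (fun t => IsFree d r t ∧ r.edge t ∈ S.sym2) N : ℝ) ≤ θ₁ / p := by
    rw [le_div_iff₀' hp]
    exact (hT.free_inside_lt S htouched hne (by omega) hblue).le
  have hsum (W : Finset V) (hWH : W ⊆ r.heavy N d) (hW : #W ≤ n) :
      ∑ w ∈ W, (degIn (r.colorGraph true N) S w : ℝ) < n * κ :=
    (hT.sum_degIn_lt hr hp.le hblue htouched hne (hWH.trans (filter_subset _ _))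
      ((card_union_le S W).trans (by omega))).trans_le hκ
  have hsq := sum_sq_le_of_forall_sum_lt (fun w _ => Nat.cast_nonneg _)
    ((by positivity : (0 : ℝ) ≤ 2 * (p * #(r.heavy N d) + θ₂)).trans hΔ)
    (fun w hw => (hT.degIn_le hr hp.le S hw).trans hΔ) hsum
  have hcount := (choose_two_le_count_inside hS.1).trans (hr.count_inside_le hT.isFree_of_red S)
  rw [hcard, ← Nat.cast_le (α := ℝ)] at hcount
  push_cast at hcount
  linarith

end Cliques

/-! ### Choice of parameters -/

section Parameters

variable {n N : ℕ} {x L : ℝ}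

lemma exp_neg_lt_one_fourth (hx : 4 ≤ x) : Real.exp (-x) < 1 / 4 := by
  rw [Real.exp_neg, one_div]
  exact inv_strictAnti₀ (by norm_num) (by linarith [Real.add_one_le_exp x])

lemma failure_bound_lt (hL : 1 ≤ Real.log n) (hn : 2 ^ 17 * Real.log n ^ 2 ≤ n)
    (hN : (N : ℝ) ≤ n ^ 3 / (2 ^ 24 * Real.log n ^ 2)) :
    (2 * N : ℝ) ^ (2 * n) * Real.exp (-(7 * n * Real.log n)) +
      2 * N * Real.exp (-(n / (2 ^ 14 * Real.log n))) < 1 / 2 := by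
  set L := Real.log n
  have hn1 : (2 : ℝ) ^ 17 ≤ n := by nlinarith
  have hexp : (n : ℝ) ^ 3 = Real.exp (3 * L) := by
    rw [← Real.exp_log (show (0 : ℝ) < n by linarith), ← Real.exp_nat_mul]
    norm_num [L]
  have h2N : 2 * (N : ℝ) ≤ Real.exp (3 * L) := by
    have htwo : 2 ≤ 2 ^ 24 * L ^ 2 := by nlinarith
    have hhalf : (N : ℝ) ≤ n ^ 3 / 2 := hN.trans (by gcongr)
    linarith
  have hlog : 8 * L ≤ n / (2 ^ 14 * L) := by
    rw [le_div_iff₀ (by positivity)]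
    linarith
  have hsets : (2 * N : ℝ) ^ (2 * n) * Real.exp (-(7 * n * L)) < 1 / 4 := calc
    (2 * N : ℝ) ^ (2 * n) * Real.exp (-(7 * n * L))
      ≤ Real.exp (3 * L) ^ (2 * n) * Real.exp (-(7 * n * L)) := by gcongr
    _ = Real.exp (-(n * L)) := by
      rw [← Real.exp_nat_mul, ← Real.exp_add]
      congr 1
      push_cast
      ring
    _ < 1 / 4 := exp_neg_lt_one_fourth (by nlinarith)
  have hvertices : 2 * N * Real.exp (-(n / (2 ^ 14 * L))) < 1 / 4 := calc
    2 * N * Real.exp (-(n / (2 ^ 14 * L))) ≤ Real.exp (3 * L) * Real.exp (-(8 * L)) := by gcongr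
    _ = Real.exp (-(5 * L)) := by rw [← Real.exp_add]; ring_nf
    _ < 1 / 4 := exp_neg_lt_one_fourth (by linarith)
  linarith

lemma Run.card_heavy_le {V : Type*} (r : Run V) (hn : 8 ≤ n)
    (hN : (N : ℝ) ≤ n ^ 3 / (2 ^ 24 * L ^ 2)) :
    (#(r.heavy N (n / 8)) : ℝ) ≤ n ^ 2 / (2 ^ 19 * L ^ 2) := by
  have hn0 : (0 : ℝ) < n := by exact_mod_cast (by omega : 0 < n)
  have hd : (n : ℝ) ≤ 16 * (n / 8 : ℕ) := by exact_mod_cast (by omega : n ≤ 16 * (n / 8))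
  have hcard : (#(r.heavy N (n / 8)) : ℝ) * (n / 8 : ℕ) ≤ 2 * N := by
    exact_mod_cast r.card_heavy_mul_le N (n / 8)
  refine le_of_mul_le_mul_right ?_ hn0
  calc (#(r.heavy N (n / 8)) : ℝ) * n ≤ #(r.heavy N (n / 8)) * (16 * (n / 8 : ℕ)) := by gcongr
    _ ≤ 32 * N := by linarith
    _ ≤ 32 * (n ^ 3 / (2 ^ 24 * L ^ 2)) := by gcongr
    _ = n ^ 2 / (2 ^ 19 * L ^ 2) * n := by ring

lemma red_budget_inside_le (n : ℕ) (hL : 0 ≤ L) :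
    2 * (28 * L / n * (2 * n + 1).choose 2 + 7 * n * L) ≤ n * (182 * L) := by
  have hsq : (n : ℝ) ≤ n ^ 2 := by exact_mod_cast Nat.le_self_pow two_ne_zero n
  have hchoose : (((2 * n + 1).choose 2 : ℕ) : ℝ) ≤ 3 * n ^ 2 := by
    rw [Nat.cast_choose_two]
    push_cast
    linarith
  calc 2 * (28 * L / n * (2 * n + 1).choose 2 + 7 * n * L)
      ≤ 2 * (28 * L / n * (3 * n ^ 2) + 7 * n * L) := by gcongr
    _ = n * (182 * L) := by
      field_simp
      ring

lemma red_budget_at_le (hL : 0 < L) (hx : x ≤ n ^ 2 / (2 ^ 19 * L ^ 2)) :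
    2 * (28 * L / n * x + n / (2 ^ 14 * L)) ≤ n / (2 ^ 12 * L) := by
  calc 2 * (28 * L / n * x + n / (2 ^ 14 * L))
      ≤ 2 * (28 * L / n * (n ^ 2 / (2 ^ 19 * L ^ 2)) + n / (2 ^ 14 * L)) := by gcongr
    _ = 15 / 16 * (n / (2 ^ 12 * L)) := by
      field_simp
      ring
    _ ≤ n / (2 ^ 12 * L) := mul_le_of_le_one_left (by positivity) (by norm_num)

lemma edge_budget_lt_choose_two (hn : 32 ≤ n) (hL : 0 < L)
    (hx : x ≤ n ^ 2 / (2 ^ 19 * L ^ 2)) :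
    n * (n / 8 : ℕ) + (n / (2 ^ 12 * L) * (n * (182 * L)) + x * (182 * L) ^ 2) +
      7 * n * L / (28 * L / n) < (n.choose 2 : ℝ) := by
  have hn32 : (32 : ℝ) ≤ n := by exact_mod_cast hn
  have hd : ((n / 8 : ℕ) : ℝ) ≤ n / 8 := by exact_mod_cast Nat.cast_div_le (m := n) (n := 8)
  calc n * (n / 8 : ℕ) + (n / (2 ^ 12 * L) * (n * (182 * L)) + x * (182 * L) ^ 2) +
        7 * n * L / (28 * L / n)
      ≤ n * (n / 8 : ℝ) + (n / (2 ^ 12 * L) * (n * (182 * L)) +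
        n ^ 2 / (2 ^ 19 * L ^ 2) * (182 * L) ^ 2) + 7 * n * L / (28 * L / n) := by gcongr
    _ = (1 / 8 + 182 / 2 ^ 12 + 182 ^ 2 / 2 ^ 19 + 1 / 4) * (n : ℝ) ^ 2 := by
      field_simp
      ring
    _ < n * (n - 1) / 2 := by nlinarith
    _ = n.choose 2 := (Nat.cast_choose_two ℝ n).symm

/-- With `L = log n` the parameters are `d = n / 8`, `p = 28 L / n`, `θ₁ = 7 n L`,
`θ₂ = n / (2 ^ 14 L)`, `κ = 182 L` and `Δ = n / (2 ^ 12 L)`. The value of `θ₁` outweighs the at most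
`n ^ (6 n)` choices of `2 n` labels; the ratio `28` makes `θ₁ / p` half of `n ^ 2 / 2`, and the
constant `2 ^ 24` makes the heavy vertices few enough for the other terms to fit in the rest. -/
theorem not_builderWins (hL : 1 ≤ Real.log n) (hn : 2 ^ 17 * Real.log n ^ 2 ≤ n)
    (hN : (N : ℝ) ≤ n ^ 3 / (2 ^ 24 * Real.log n ^ 2)) : ¬ BuilderWins 3 n N := by
  rintro ⟨B, hB, hwin⟩
  have hfail := failure_bound_lt hL hn hN
  set L := Real.log n
  have hL0 : 0 < L := by linarith
  have hn1 : (2 : ℝ) ^ 17 * L ≤ n := by nlinarith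
  have hn32 : 32 ≤ n := by exact_mod_cast (by linarith : (32 : ℝ) ≤ n)
  have hn0 : (0 : ℝ) < n := by positivity
  obtain ⟨P, hT⟩ := exists_painter_isTypical (d := n / 8) (p := 28 * L / n) B (by positivity)
    (by rw [div_lt_one hn0]; linarith) hfail
  have hsimple := play_isSimple hB P
  have hheavy := (play B P).card_heavy_le (by omega) hN
  rcases hwin P with hred | hblue
  · obtain ⟨S, hS⟩ := (hasMonoClique_iff (r := play B P)).mp hred
    exact Run.colorGraph_cliqueFree_three hT.isFree_of_red S hS
  · obtain ⟨S, hS⟩ := (hasMonoClique_iff (r := play B P)).mp hblue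
    have hle := hT.choose_two_le hsimple hS (by omega) (by positivity) (by positivity)
      (red_budget_inside_le n hL0.le) (red_budget_at_le hL0 hheavy)
    exact hle.not_gt (edge_budget_lt_choose_two hn32 hL0 hheavy)

lemma eventually_two_pow_mul_log_sq_le :
    ∀ᶠ n : ℕ in Filter.atTop, 2 ^ 17 * Real.log n ^ 2 ≤ n := by
  have hlittle := (Real.isLittleO_pow_log_id_atTop (n := 2)).bound
    (show (0 : ℝ) < (2 ^ 17)⁻¹ by positivity)
  filter_upwards [tendsto_natCast_atTop_atTop.eventually hlittle] with n hn
  rw [id, Real.norm_of_nonneg (sq_nonneg _), Real.norm_natCast] at hn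
  linarith

end Parameters

end

theorem stmt3 :
    ∃ c : ℝ, 0 < c ∧ ∃ n₀ : ℕ, ∀ n : ℕ, n₀ ≤ n →
      c * (n : ℝ) ^ 3 / (Real.log n) ^ 2 ≤ (onlineRamsey 3 n : ℝ) := by
  have hlog := (Real.tendsto_log_atTop.comp tendsto_natCast_atTop_atTop).eventually_ge_atTop 1
  obtain ⟨n₀, hn₀⟩ := Filter.eventually_atTop.mp (hlog.and eventually_two_pow_mul_log_sq_le)
  refine ⟨1 / 2 ^ 24, by positivity, n₀, fun n hn => ?_⟩
  obtain ⟨hL, hn⟩ := hn₀ n hn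
  by_contra! hlt
  rw [div_mul_eq_mul_div, one_mul, div_div] at hlt
  exact not_builderWins hL hn hlt.le (Nat.sInf_mem (exists_builderWins 3 n))

end OnlineRamseyGame
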